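/- arXiv:0704.3298 — 3 statements merged into one kernel-verified Lean document; each statement's English description precedes it below -/
import Mathlib

section
/- Let A, B, C, D be vector spaces over ℚ, let f : A → B and g : C → D be linear maps, and let p₁ : A × D → ℚ and p₂ : B × C → ℚ be bilinear pairings that are nondegenerate (separating in both variables) and compatible in the sense that p₁(a, g(c)) = p₂(f(a), c) for all a ∈ A and c ∈ C. Then there exists a bilinear pairing p₃ : (range f) × (range g) → ℚ which is nondegenerate (separating in both variables) and satisfies p₃(f(a), g(c)) = p₂(f(a), c) = p₁(a, g(c)) for all a ∈ A and c ∈ C. -/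
/-- Duals of Images: given compatible nondegenerate pairings `p₁ : A × D → ℚ` and
`p₂ : B × C → ℚ` with linear maps `f : A → B`, `g : C → D` satisfying
`p₁ (a, g c) = p₂ (f a, c)`, there is an induced nondegenerate pairing
`range f × range g → ℚ` compatible with `p₁` and `p₂`. -/
theorem duals_of_images
    (A B C D : Type*)
    [AddCommGroup A] [Module ℚ A] [AddCommGroup B] [Module ℚ B]
    [AddCommGroup C] [Module ℚ C] [AddCommGroup D] [Module ℚ D]
    (f : A →ₗ[ℚ] B) (g : C →ₗ[ℚ] D)
    (p₁ : A →ₗ[ℚ] D →ₗ[ℚ] ℚ) (p₂ : B →ₗ[ℚ] C →ₗ[ℚ] ℚ)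
    (h₁l : ∀ a : A, (∀ d : D, p₁ a d = 0) → a = 0)
    (h₁r : ∀ d : D, (∀ a : A, p₁ a d = 0) → d = 0)
    (h₂l : ∀ b : B, (∀ c : C, p₂ b c = 0) → b = 0)
    (h₂r : ∀ c : C, (∀ b : B, p₂ b c = 0) → c = 0)
    (hcompat : ∀ (a : A) (c : C), p₁ a (g c) = p₂ (f a) c) :
    ∃ p₃ : (LinearMap.range f) →ₗ[ℚ] (LinearMap.range g) →ₗ[ℚ] ℚ,
      (∀ x : LinearMap.range f, (∀ y : LinearMap.range g, p₃ x y = 0) → x = 0) ∧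
      (∀ y : LinearMap.range g, (∀ x : LinearMap.range f, p₃ x y = 0) → y = 0) ∧
      (∀ (a : A) (c : C),
        p₃ ⟨f a, LinearMap.mem_range_self f a⟩ ⟨g c, LinearMap.mem_range_self g c⟩
          = p₂ (f a) c ∧
        p₂ (f a) c = p₁ a (g c)) := by
  obtain ⟨s, hs⟩ := f.rangeRestrict.exists_rightInverse_of_surjective f.range_rangeRestrict
  have hs' : ∀ x : LinearMap.range f, f (s x) = x := fun x =>
    congrArg Subtype.val (LinearMap.congr_fun hs x)
  have key : ∀ (x : LinearMap.range f) (c : C), p₁ (s x) (g c) = p₂ x c := fun x c => by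
    rw [hcompat, hs']
  refine ⟨(p₁.comp s).compl₂ (LinearMap.range g).subtype, ?_, ?_, ?_⟩
  · intro x hx
    apply Subtype.ext
    refine h₂l _ fun c => ?_
    rw [← key]
    exact hx ⟨g c, LinearMap.mem_range_self g c⟩
  · rintro ⟨_, c, rfl⟩ hy
    apply Subtype.ext
    refine h₁r _ fun a => ?_
    have h := hy ⟨f a, LinearMap.mem_range_self f a⟩
    change p₁ (s _) (g c) = 0 at h
    rw [key] at h
    exact (hcompat a c).trans h
  · intro a c
    exact ⟨key ⟨f a, LinearMap.mem_range_self f a⟩ c, (hcompat a c).symm⟩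
end

section
/- Let A, V, W, B be vector spaces over ℚ with V and W finite-dimensional, let f : A → V and g : W → B be linear maps, and let p₁ : A × B → ℚ and p₂ : V × W → ℚ be bilinear pairings that are nondegenerate (separating in both variables) and satisfy p₁(a, g(w)) = p₂(f(a), w) for all a ∈ A and w ∈ W. Then there exist linear isomorphisms λ : range f → (range g)* and ν : range g → (range f)* such that λ(f(a))(g(w)) = p₂(f(a), w) = p₁(a, g(w)) = ν(g(w))(f(a)) for all a ∈ A and w ∈ W; in particular dim (range f) = dim (range g). -/
/-- Self-duality of the zig-zag object `Θ₀`: given compatible nondegenerate pairings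
`p₁ : A × B → ℚ` and `p₂ : V × W → ℚ` (with `V`, `W` finite-dimensional) and linear
maps `f : A → V`, `g : W → B` with `p₁ (a, g w) = p₂ (f a, w)`, there are isomorphisms
`λ : range f ≃ (range g)*` and `ν : range g ≃ (range f)*` compatible with the pairings;
in particular `dim (range f) = dim (range g)`. -/
theorem selfdual_isos
    (A V W B : Type*)
    [AddCommGroup A] [Module ℚ A] [AddCommGroup V] [Module ℚ V]
    [AddCommGroup W] [Module ℚ W] [AddCommGroup B] [Module ℚ B]
    [FiniteDimensional ℚ V] [FiniteDimensional ℚ W]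
    (f : A →ₗ[ℚ] V) (g : W →ₗ[ℚ] B)
    (p₁ : A →ₗ[ℚ] B →ₗ[ℚ] ℚ) (p₂ : V →ₗ[ℚ] W →ₗ[ℚ] ℚ)
    (h₁l : ∀ a : A, (∀ b : B, p₁ a b = 0) → a = 0)
    (h₁r : ∀ b : B, (∀ a : A, p₁ a b = 0) → b = 0)
    (h₂l : ∀ v : V, (∀ w : W, p₂ v w = 0) → v = 0)
    (h₂r : ∀ w : W, (∀ v : V, p₂ v w = 0) → w = 0)
    (hcompat : ∀ (a : A) (w : W), p₁ a (g w) = p₂ (f a) w) :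
    (∃ (lam : LinearMap.range f ≃ₗ[ℚ] Module.Dual ℚ (LinearMap.range g))
       (nu : LinearMap.range g ≃ₗ[ℚ] Module.Dual ℚ (LinearMap.range f)),
      ∀ (a : A) (w : W),
        lam ⟨f a, LinearMap.mem_range_self f a⟩ ⟨g w, LinearMap.mem_range_self g w⟩
          = p₂ (f a) w ∧
        p₂ (f a) w = p₁ a (g w) ∧
        p₁ a (g w)
          = nu ⟨g w, LinearMap.mem_range_self g w⟩ ⟨f a, LinearMap.mem_range_self f a⟩) ∧
    Module.finrank ℚ (LinearMap.range f) = Module.finrank ℚ (LinearMap.range g) := by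
  obtain ⟨s, hs⟩ := g.rangeRestrict.exists_rightInverse_of_surjective g.range_rangeRestrict
  have hs' : ∀ b : LinearMap.range g, g (s b) = b := fun b =>
    congrArg Subtype.val (LinearMap.congr_fun hs b)
  let q : LinearMap.range f →ₗ[ℚ] LinearMap.range g →ₗ[ℚ] ℚ :=
    (p₂.comp (LinearMap.range f).subtype).compl₂ s
  have hq : ∀ a w, q ⟨f a, LinearMap.mem_range_self f a⟩ ⟨g w, LinearMap.mem_range_self g w⟩
      = p₁ a (g w) := by
    intro a w
    change p₂ (f a) (s _) = _
    rw [← hcompat, hs']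
  have hl : Function.Injective q := by
    rw [injective_iff_map_eq_zero]
    rintro ⟨_, a, rfl⟩ h
    apply Subtype.ext
    apply h₂l
    intro w
    rw [← hcompat, ← hq, h]
    rfl
  have hr : Function.Injective q.flip := by
    rw [injective_iff_map_eq_zero]
    rintro ⟨_, w, rfl⟩ h
    apply Subtype.ext
    apply h₁r
    intro a
    have := LinearMap.congr_fun h ⟨f a, LinearMap.mem_range_self f a⟩
    rw [← hq]
    exact this
  have : q.IsPerfPair := LinearMap.IsPerfPair.of_injective hl hr
  refine ⟨⟨q.toPerfPair, q.flip.toPerfPair, fun a w => ⟨?_, (hcompat a w).symm, ?_⟩⟩, ?_⟩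
  · rw [← hcompat]
    exact hq a w
  · exact (hq a w).symm
  · exact q.toPerfPair.finrank_eq.trans Subspace.dual_finrank_eq
end

section
/- Let a₁, a₂, a₃, a₄, a₅ ∈ ℂ with aᵢ ≠ 0 for i = 1, 2, 3, 4, and let I be the polynomial I = X₅³·(X₁² + X₂² + X₃² + X₄²) + Σ_{i=1}^{5} aᵢ Xᵢ⁵ in five variables over ℂ. If x = (x₁,...,x₅) ∈ ℂ⁵ satisfies x₅ = 0 and (∂I/∂Xᵢ)(x) = 0 for i = 1, 2, 3, 4, then xᵢ = 0 for i = 1, 2, 3, 4, and hence x = 0. In particular, every common zero of I and all its partial derivatives other than the origin has x₅ ≠ 0, so all singular points of the quintic hypersurface {I = 0} ⊂ ℙ⁴ lie in the coordinate patch x₅ ≠ 0. -/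
open MvPolynomial

/-- For the quintic `I = X₅³(X₁²+X₂²+X₃²+X₄²) + Σᵢ aᵢXᵢ⁵` with `a₁,…,a₄ ≠ 0`
(variables indexed by `Fin 5`, with index `4` playing the role of `x₅`):
any point with `x₅ = 0` at which the first four partial derivatives vanish is the
origin; in particular every nonzero common zero of all partial derivatives has
`x₅ ≠ 0`, so all singular points of `{I = 0} ⊂ ℙ⁴` lie in the patch `x₅ ≠ 0`. -/
theorem quintic_singularities_in_patch
    (a : Fin 5 → ℂ) (ha : ∀ i : Fin 5, i ≠ 4 → a i ≠ 0)
    (I : MvPolynomial (Fin 5) ℂ)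
    (hI : I = (X 4) ^ 3 * ((X 0) ^ 2 + (X 1) ^ 2 + (X 2) ^ 2 + (X 3) ^ 2)
        + ∑ i : Fin 5, MvPolynomial.C (a i) * (X i) ^ 5) :
    (∀ x : Fin 5 → ℂ, x 4 = 0 →
      (∀ i : Fin 5, i ≠ 4 → MvPolynomial.eval x (MvPolynomial.pderiv i I) = 0) →
      ∀ i : Fin 5, x i = 0) ∧
    (∀ x : Fin 5 → ℂ,
      (∀ i : Fin 5, MvPolynomial.eval x (MvPolynomial.pderiv i I) = 0) →
      x ≠ 0 → x 4 ≠ 0) := by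
  have key : ∀ x : Fin 5 → ℂ, x 4 = 0 →
      (∀ i : Fin 5, i ≠ 4 → MvPolynomial.eval x (MvPolynomial.pderiv i I) = 0) →
      ∀ i : Fin 5, x i = 0 := by
    intro x h4 h i
    by_cases hi : i = 4
    · rw [hi, h4]
    have e := h i hi
    have hai := ha i hi
    have e2 : MvPolynomial.eval x (MvPolynomial.pderiv i I) = 5 * a i * x i ^ 4 := by
      rw [hI, map_add, map_add, Derivation.leibniz, Derivation.leibniz_pow,
        pderiv_X_of_ne (Ne.symm hi), map_sum, map_sum, Finset.sum_eq_single i]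
      · simp [Derivation.leibniz_pow, h4]
        ring
      · intro j _ hj
        simp [Derivation.leibniz_pow, pderiv_X_of_ne hj]
      · simp
    rw [e2] at e
    simpa [hai] using e
  refine ⟨key, ?_⟩
  intro x h hx h4
  exact hx (funext (key x h4 (fun i _ => h i)))
end
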